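/- Let N be a positive natural number and let Δ : ℤ × ℤ →+ ℤ × ℤ be the additive group homomorphism Δ(m, n) = (0, m·N). Then the kernel of Δ is isomorphic as an additive group to ℤ, and the quotient group (ℤ × ℤ) ⧸ (range of Δ) is isomorphic as an additive group to ℤ × ZMod N. -/

import Mathlib

/-!
`Δ` factors as the projection to the first coordinate, the injection `m ↦ m • N` of `ℤ` into
itself, and the inclusion of the second coordinate. Hence `Δ.ker = 0 × ℤ` and `Δ.range = 0 × Nℤ`,
and both the kernel and the cokernel split as products.
-/

section InrCompFst

variable {A B C D : Type*} [AddGroup A] [AddGroup B] [AddGroup C] [AddGroup D]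

open AddMonoidHom

theorem ker_inr_comp_comp_fst (f : A →+ D) :
    ((inr C D).comp (f.comp (fst A B))).ker = f.ker.prod ⊤ := by
  rw [ker_comp_of_injective _ _ (Prod.mk_right_injective 0), ← comap_ker, AddSubgroup.prod_top]

theorem range_inr_comp_comp_fst (f : A →+ D) :
    ((inr C D).comp (f.comp (fst A B))).range = (⊥ : AddSubgroup C).prod f.range := by
  ext ⟨c, d⟩
  simp [AddSubgroup.mem_prod, eq_comm]

variable (C) in
/-- The cokernel of an inclusion `0 × H ≤ C × D` as the product of `C` and the cokernel of
`H ≤ D`. -/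
def quotientBotProdAddEquiv (H : AddSubgroup D) [H.Normal] :
    (C × D) ⧸ (⊥ : AddSubgroup C).prod H ≃+ C × (D ⧸ H) :=
  (QuotientAddGroup.prodAddEquiv ⊥ H).trans
    (QuotientAddGroup.quotientBot.prodCongr (AddEquiv.refl (D ⧸ H)))

variable (A B) in
/-- The subgroup `0 × B` of `A × B` as a copy of `B`. -/
def botProdTopAddEquiv : (⊥ : AddSubgroup A).prod (⊤ : AddSubgroup B) ≃+ B :=
  (AddSubgroup.prodEquiv ⊥ ⊤).trans (AddEquiv.uniqueProd.trans AddSubgroup.topEquiv)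

end InrCompFst

/-- Computation for `S¹ × S²`: with `Δ(m,n) = (0, mN)` and `N > 0`, the kernel of `Δ` is
isomorphic to `ℤ` and the cokernel of `Δ` is isomorphic to `ℤ × ℤ/Nℤ`. -/
theorem ker_equiv_int_and_coker_equiv_int_prod_zmod
    (N : ℕ) (hN : 0 < N)
    (Δ : ℤ × ℤ →+ ℤ × ℤ) (hΔ : ∀ mn : ℤ × ℤ, Δ mn = (0, mn.1 * (N : ℤ))) :
    Nonempty (Δ.ker ≃+ ℤ) ∧ Nonempty ((ℤ × ℤ) ⧸ Δ.range ≃+ ℤ × ZMod N) := by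
  let mulN : ℤ →+ ℤ := zmultiplesHom ℤ (N : ℤ)
  have mulN_injective : Function.Injective mulN :=
    smul_left_injective ℤ (Nat.cast_ne_zero.mpr hN.ne')
  have Δ_eq : Δ = (AddMonoidHom.inr ℤ ℤ).comp (mulN.comp (AddMonoidHom.fst ℤ ℤ)) :=
    AddMonoidHom.ext hΔ
  have ker_eq : Δ.ker = (⊥ : AddSubgroup ℤ).prod ⊤ := by
    rw [Δ_eq, ker_inr_comp_comp_fst, mulN.ker_eq_bot mulN_injective]
  have range_eq : Δ.range = (⊥ : AddSubgroup ℤ).prod (AddSubgroup.zmultiples (N : ℤ)) := by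
    rw [Δ_eq, range_inr_comp_comp_fst, AddSubgroup.range_zmultiplesHom]
  refine ⟨⟨?kernel⟩, ⟨?cokernel⟩⟩
  case kernel =>
    exact (AddEquiv.addSubgroupCongr ker_eq).trans (botProdTopAddEquiv ℤ ℤ)
  case cokernel =>
    exact (QuotientAddGroup.quotientAddEquivOfEq range_eq).trans <|
      (quotientBotProdAddEquiv ℤ (AddSubgroup.zmultiples (N : ℤ))).trans <|
        (AddEquiv.refl ℤ).prodCongr (Int.quotientZMultiplesNatEquivZMod N)
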